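/- There exists a class of languages that is learnable by a set-driven, strongly monotone, behaviorally correct learner from informants but not learnable by any full-information explanatory learner from informants: [Inf Sd SMon Bc] \ [Inf G Ex] ≠ ∅. -/

import Mathlib

open Filter Classical

namespace InfBc

/-! ### Basic notions: r.e. sets, informants, learners -/

/-- The `e`-th recursively enumerable set (via an acceptable numbering of
partial computable functions, `W e = dom φ_e`). -/
def W (e : ℕ) : Set ℕ := {x | ((Denumerable.ofNat Nat.Partrec.Code e).eval x).Dom}

/-- A language is recursively enumerable. -/
def RE (L : Set ℕ) : Prop := ∃ e, W e = L

abbrev Datum := ℕ × Bool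
abbrev Seq := List Datum
abbrev Informant := ℕ → Datum
abbrev HypSeq := ℕ → Part ℕ
/-- Learners are partial functions; all input types are coded into `ℕ`. -/
abbrev Learner := ℕ →. ℕ
abbrev Restriction := HypSeq → Informant → Prop

/-- Positive information of an infinite sequence. -/
def posI (I : Informant) : Set ℕ := {x | ∃ n, I n = (x, true)}
/-- Negative information of an infinite sequence. -/
def negI (I : Informant) : Set ℕ := {x | ∃ n, I n = (x, false)}

/-- `I` is an informant for the language `L`. -/
def IsInformant (I : Informant) (L : Set ℕ) : Prop := posI I = L ∧ negI I = Lᶜ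

/-- `I` is an informant (for some language), i.e. `I ∈ Inf`. -/
def IsInf (I : Informant) : Prop := IsInformant I (posI I)

/-- `I` is a canonical informant. -/
def Canonical (I : Informant) : Prop := ∀ x, I x = (x, true) ∨ I x = (x, false)

/-- `I[n]`, the length-`n` initial segment of `I`. -/
def segment (I : Informant) (n : ℕ) : Seq := (List.range n).map I

/-- Positive information of a finite sequence. -/
def posS (σ : Seq) : Set ℕ := {x | (x, true) ∈ σ}
/-- Negative information of a finite sequence. -/
def negS (σ : Seq) : Set ℕ := {x | (x, false) ∈ σ}
/-- The content of a finite sequence, as a set. -/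
def contentS (σ : Seq) : Set Datum := {a | a ∈ σ}

/-! ### Interaction operators -/

abbrev InteractionOperator := Learner → Informant → HypSeq

/-- Full-information (Gold-style) interaction: `G(h,I)(i) = h(I[i])`. -/
def Gop : InteractionOperator := fun h I i => h (Encodable.encode (segment I i))

/-- Set-driven interaction: `Sd(h,I)(i) = h(content(I[i]))`. -/
def Sdop : InteractionOperator := fun h I i => h (Encodable.encode (segment I i).toFinset)

/-- The iterated evaluation of an iterative learner on a finite sequence:
start with the initial hypothesis `h(none)` and feed the data one by one. -/
def iterExtend (h : Learner) (σ : Seq) : Part ℕ :=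
  σ.foldl (fun pe a => pe.bind fun e => h (Encodable.encode (some (e, a))))
    (h (Encodable.encode (none : Option (ℕ × Datum))))

/-- Iterative interaction: `It(h,I)(i)` is obtained by feeding `I[i]` one datum
at a time, each time updating the previous hypothesis. -/
def Itop : InteractionOperator := fun h I i => iterExtend h (segment I i)

/-- An iterative learner is confluent if the order and multiplicity in which
the content is presented does not matter. -/
def ConfluentLearner (h : Learner) : Prop :=
  ∀ σ τ : Seq, contentS σ = contentS τ → iterExtend h σ = iterExtend h τ

/-- Confluently iterative interaction. -/
noncomputable def CflItop : InteractionOperator := fun h I i =>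
  if ConfluentLearner h then iterExtend h (segment I i) else Part.none

/-- `β ≼ β'`: every (partial computable) `β`-learner can be translated into a
`β'`-learner with the same hypothesis sequence on every informant. -/
def OpLe (β β' : InteractionOperator) : Prop :=
  ∀ h : Learner, Partrec h → ∃ h' : Learner, Partrec h' ∧
    ∀ I : Informant, IsInf I → ∀ n, β h I n = β' h' I n

/-! ### Learning restrictions -/

/-- The trivial restriction `T`. -/
def TT : Restriction := fun _ _ => True

/-- Explanatory identification. -/
def Ex : Restriction := fun p I =>
  ∃ q, W q = posI I ∧ ∀ᶠ n in atTop, p n = Part.some q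

/-- Behaviorally correct identification. -/
def Bc : Restriction := fun p I => ∀ᶠ n in atTop, ∃ e ∈ p n, W e = posI I

/-- Consistency of a hypothesis with a finite sequence of data. -/
def ConsH (e : ℕ) (σ : Seq) : Prop := posS σ ⊆ W e ∧ negS σ ∩ W e = ∅

/-- Consistency of a hypothesis sequence with an informant. -/
def Cons : Restriction := fun p I => ∀ n, ∃ e ∈ p n, ConsH e (segment I n)

/-- Strongly monotone. -/
def SMon : Restriction := fun p _ =>
  ∀ s t, s ≤ t → ∀ e ∈ p s, ∀ e' ∈ p t, W e ⊆ W e'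

/-- Dual strongly monotone. -/
def SMond : Restriction := fun p _ =>
  ∀ s t, s ≤ t → ∀ e ∈ p s, ∀ e' ∈ p t, W e' ⊆ W e

/-- Monotone. -/
def Mon : Restriction := fun p I =>
  ∀ s t, s ≤ t → ∀ e ∈ p s, ∀ e' ∈ p t, W e ∩ posI I ⊆ W e' ∩ posI I

/-- Dual monotone. -/
def Mond : Restriction := fun p I =>
  ∀ s t, s ≤ t → ∀ e ∈ p s, ∀ e' ∈ p t, (W e)ᶜ ∩ negI I ⊆ (W e')ᶜ ∩ negI I

/-- Weakly monotone. -/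
def WMon : Restriction := fun p I =>
  ∀ s t, s ≤ t → ∀ e ∈ p s, ConsH e (segment I t) → ∀ e' ∈ p t, W e ⊆ W e'

/-- Dual weakly monotone. -/
def WMond : Restriction := fun p I =>
  ∀ s t, s ≤ t → ∀ e ∈ p s, ConsH e (segment I t) → ∀ e' ∈ p t, W e' ⊆ W e

/-- Cautious. -/
def Caut : Restriction := fun p _ =>
  ∀ s t, s < t → ∀ e ∈ p s, ∀ e' ∈ p t, ¬ W e' ⊂ W e

/-- Target cautious. -/
def CautTar : Restriction := fun p I =>
  ∀ s, ∀ e ∈ p s, ¬ posI I ⊂ W e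

/-- Finitely cautious. -/
def CautFin : Restriction := fun p _ =>
  ∀ s t, s < t → ∀ e ∈ p s, ∀ e' ∈ p t, W e' ⊂ W e → (W e').Infinite

/-- Infinitely cautious. -/
def CautInf : Restriction := fun p _ =>
  ∀ s t, s < t → ∀ e ∈ p s, ∀ e' ∈ p t, W e' ⊂ W e → (W e').Finite

/-! ### Learnability -/

/-- The class of admissible learners: all partial computable learners. -/
def AllL : Learner → Prop := fun _ => True
/-- The class of admissible learners: total computable learners (`ℛ`). -/
def TotalL : Learner → Prop := fun h => ∀ x, (h x).Dom
/-- Admissible informants: all informants (`Inf`). -/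
def AllI : Informant → Prop := fun _ => True

/-- `h` learns `L` in the setting given by admissible informants `P`,
interaction operator `β` and local restriction `δ`. -/
def LearnsWith (P : Informant → Prop) (β : InteractionOperator) (δ : Restriction)
    (h : Learner) (L : Set ℕ) : Prop :=
  RE L ∧ ∀ I : Informant, P I → IsInformant I L → δ (β h I) I

/-- `[τ(α) C P β δ]`: the collection of all classes of languages learnable by
some learner in `C` that satisfies the global restriction `α` on all admissible
informants, under interaction operator `β` and local restriction `δ`. -/
def Learnable (α : Restriction) (C : Learner → Prop) (P : Informant → Prop)
    (β : InteractionOperator) (δ : Restriction) : Set (Set (Set ℕ)) :=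
  {𝓛 | ∃ h : Learner, Partrec h ∧ C h ∧
        (∀ I : Informant, IsInf I → P I → α (β h I) I) ∧
        ∀ L ∈ 𝓛, LearnsWith P β δ h L}

/-! ### Properties of restrictions -/

/-- A learning restriction is delayable if it is preserved under postponing
hypotheses along a non-decreasing unbounded function. -/
def Delayable (δ : Restriction) : Prop :=
  ∀ I I' : Informant, IsInf I → IsInf I' → Set.range I = Set.range I' →
    ∀ (p : HypSeq) (s : ℕ → ℕ), Monotone s → (∀ m, ∃ n, m ≤ s n) →
      δ p I → (∀ n, contentS (segment I (s n)) ⊆ contentS (segment I' n)) →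
      δ (fun n => p (s n)) I'

/-- A learning restriction is semantic if it is indifferent to replacing the
hypothesis sequence by a semantically equivalent one. -/
def Semantic (δ : Restriction) : Prop :=
  ∀ (p p' : HypSeq) (I : Informant), δ p I →
    (∀ i, (p i).Dom ↔ (p' i).Dom) →
    (∀ i, ∀ e ∈ p i, ∀ e' ∈ p' i, W e = W e') →
    δ p' I

/-!
For `x : ℕ` read `x.unpair.1` as an index announced by `x`. The separating class consists of the
languages `L` all of whose elements announce one and the same index `e` with `W e ⊆ L` and
`L \ W e` finite. Conjecturing, on data with positive part `A`, the set `A ∪ ⋃ x ∈ A, W x.unpair.1`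
depends on the content only, is monotone in `A`, and is correct as soon as `A` contains `L \ W e`
and at least one element of `L`.

Given a computable explanatory learner, build a binary string in stages: whenever some extension of
the current string is found on which the learner outputs something other than its last recorded
value, move to that extension. By the recursion theorem some `e` satisfies `W e = {e} × S` where
`S` is the set described by the strings built against column `e`. If the string is extended
infinitely often, the learner changes its mind infinitely often on `{e} × S`. Otherwise `S` is
finite and the learner has at most one limit on all sets extending the last string, although two
different such sets yield members of the class.
-/

open Nat.Partrec (Code)
open Encodable (encode decode)

/-! ### Recursively enumerable families -/

section Computability

variable {α : Type*} [Primcodable α]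

lemma rePred_exists_nat {R : α → ℕ → Prop} (hR : PrimrecRel R) :
    REPred fun a => ∃ k, R a k := by
  have hsearch : Partrec fun a => Nat.rfind fun k => Part.some (decide (R a k)) :=
    Partrec.rfind (p := fun a k => Part.some (decide (R a k))) hR.decide.to_comp.partrec₂
  refine hsearch.dom_re.of_eq fun a => Nat.rfind_dom.trans ⟨?_, ?_⟩
  · rintro ⟨k, hk, -⟩
    exact ⟨k, of_decide_eq_true (Part.mem_some_iff.1 hk).symm⟩
  · rintro ⟨k, hk⟩
    exact ⟨k, Part.mem_some_iff.2 (decide_eq_true hk).symm, fun _ => trivial⟩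

lemma mem_W_iff_exists_evaln {e y : ℕ} :
    y ∈ W e ↔ ∃ k, (Code.evaln k (Denumerable.ofNat Code e) y).isSome := by
  simp only [W, Set.mem_ofPred_eq, Part.dom_iff_mem, Code.evaln_complete,
    Option.isSome_iff_exists, Option.mem_def]
  exact exists_comm

lemma exists_computable_index {p : α × ℕ → Prop} (hp : REPred p) :
    ∃ g : α → ℕ, Computable g ∧ ∀ a, W (g a) = {y | p (a, y)} := by
  obtain ⟨c, hc⟩ := Code.exists_code.1 hp
  refine ⟨fun a => encode (Code.curry c (encode a)), ?_, fun a => ?_⟩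
  · exact (Primrec.encode.comp
      (Code.primrec₂_curry.comp (Primrec.const c) Primrec.encode)).to_comp
  · ext y
    simp [W, Code.eval_curry, hc, Part.assert]

lemma exists_self_referential_index {p : ℕ × ℕ → Prop} (hp : REPred p) :
    ∃ e, W e = {y | p (e, y)} := by
  obtain ⟨g, hg, hWg⟩ := exists_computable_index hp
  obtain ⟨c, hc⟩ := Code.fixed_point (f := fun c => Denumerable.ofNat Code (g (encode c)))
    ((Computable.ofNat Code).comp (hg.comp Computable.encode))
  refine ⟨encode c, ?_⟩
  rw [← hWg]
  simp only [W, Denumerable.ofNat_encode, hc]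

end Computability

/-! ### Informants and their initial segments -/

lemma mem_segment {I : Informant} {n : ℕ} {d : Datum} : d ∈ segment I n ↔ ∃ i < n, I i = d := by
  simp [segment]

lemma posS_segment_mono (I : Informant) : Monotone fun n => posS (segment I n) := by
  intro m n hmn x hx
  obtain ⟨i, hi, hIi⟩ := mem_segment.1 hx
  exact mem_segment.2 ⟨i, hi.trans_le hmn, hIi⟩

lemma posS_segment_subset_posI (I : Informant) (n : ℕ) : posS (segment I n) ⊆ posI I := by
  intro x hx
  obtain ⟨i, -, hIi⟩ := mem_segment.1 hx
  exact ⟨i, hIi⟩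

lemma eventually_subset_posS_segment {I : Informant} {B : Set ℕ} (hB : B.Finite)
    (hBI : B ⊆ posI I) : ∀ᶠ n in atTop, B ⊆ posS (segment I n) := by
  refine (eventually_all_finite hB).2 fun x hx => ?_
  obtain ⟨i, hIi⟩ := hBI hx
  filter_upwards [eventually_gt_atTop i] with n hn
  exact mem_segment.2 ⟨i, hn, hIi⟩

/-- The informant for `L` that presents the natural numbers in their natural order. -/
noncomputable def canonicalInformant (L : Set ℕ) : Informant := fun x => (x, decide (x ∈ L))

lemma isInformant_canonicalInformant (L : Set ℕ) : IsInformant (canonicalInformant L) L := by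
  constructor <;> ext x <;> simp [posI, negI, canonicalInformant]

lemma re_posI_of_bc {p : HypSeq} {I : Informant} (h : Bc p I) : RE (posI I) := by
  obtain ⟨_, e, -, he⟩ := h.exists
  exact ⟨e, he⟩

/-! ### The separating class -/

/-- Languages whose elements all announce one index `e`, via the first component of the pairing
function, such that `W e` equals the language up to finitely many missing elements. -/
def almostSelfDescribing : Set (Set ℕ) :=
  {L | ∃ e, (∀ x ∈ L, x.unpair.1 = e) ∧ W e ⊆ L ∧ (L \ W e).Finite}

/-- `A` together with everything enumerated by the indices announced by elements of `A`. -/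
def indexClosure (A : Set ℕ) : Set ℕ := A ∪ ⋃ x ∈ A, W x.unpair.1

lemma indexClosure_mono : Monotone indexClosure :=
  fun _ _ hAB => Set.union_subset_union hAB (Set.biUnion_subset_biUnion_left hAB)

lemma exists_finite_forall_indexClosure_eq {L : Set ℕ} (hL : L ∈ almostSelfDescribing) :
    ∃ B ⊆ L, B.Finite ∧ ∀ A, B ⊆ A → A ⊆ L → indexClosure A = L := by
  obtain ⟨e, hcol, hWL, hfin⟩ := hL
  have hclosure_subset : ∀ A ⊆ L, indexClosure A ⊆ L := fun A hA =>
    Set.union_subset hA (Set.iUnion₂_subset fun x hx => by rwa [hcol x (hA hx)])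
  rcases L.eq_empty_or_nonempty with rfl | ⟨x₀, hx₀⟩
  · exact ⟨∅, subset_rfl, Set.finite_empty, fun A _ hA =>
      Set.subset_empty_iff.1 (hclosure_subset A hA)⟩
  · refine ⟨insert x₀ (L \ W e), Set.insert_subset hx₀ Set.sdiff_subset, hfin.insert x₀,
      fun A hBA hA => (hclosure_subset A hA).antisymm fun y hy => ?_⟩
    obtain ⟨hx₀A, hdiff⟩ := Set.insert_subset_iff.1 hBA
    by_cases hyW : y ∈ W e
    · exact Or.inr (Set.mem_biUnion hx₀A (by rwa [hcol x₀ hx₀]))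
    · exact Or.inl (hdiff ⟨hy, hyW⟩)

lemma rePred_mem_indexClosure_posS :
    REPred fun q : Seq × ℕ => q.2 ∈ indexClosure (posS q.1) := by
  let announces (d : Datum) (q : ℕ × ℕ) : Prop :=
    d.2 = true ∧ (d.1 = q.1 ∨
      (Code.evaln q.2 (Denumerable.ofNat Code d.1.unpair.1) q.1).isSome = true)
  have hannounces : PrimrecRel announces := by
    have hx : Primrec fun r : Datum × ℕ × ℕ => r.1.1 := Primrec.fst.comp Primrec.fst
    have hy : Primrec fun r : Datum × ℕ × ℕ => r.2.1 := Primrec.fst.comp Primrec.snd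
    have hk : Primrec fun r : Datum × ℕ × ℕ => r.2.2 := Primrec.snd.comp Primrec.snd
    have hcode : Primrec fun r : Datum × ℕ × ℕ => Denumerable.ofNat Code r.1.1.unpair.1 :=
      (Primrec.ofNat Code).comp (Primrec.fst.comp (Primrec.unpair.comp hx))
    exact (Primrec.eq.comp (Primrec.snd.comp Primrec.fst) (Primrec.const true)).and
      ((Primrec.eq.comp hx hy).or (Primrec.eq.comp (Primrec.option_isSome.comp
        (Code.primrec_evaln.comp ((hk.pair hcode).pair hy))) (Primrec.const true)))
  have hR : PrimrecRel fun (q : Seq × ℕ) (k : ℕ) => ∃ d ∈ q.1, announces d (q.2, k) :=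
    hannounces.exists_mem_list.comp (Primrec.fst.comp Primrec.fst)
      ((Primrec.snd.comp Primrec.fst).pair Primrec.snd)
  refine (rePred_exists_nat hR).of_eq fun ⟨σ, y⟩ => ?_
  simp only [announces, indexClosure, posS, Set.mem_union, Set.mem_iUnion, Set.mem_ofPred_eq,
    mem_W_iff_exists_evaln]
  constructor
  · rintro ⟨k, ⟨x, _⟩, hx, rfl, rfl | hk⟩
    · exact Or.inl hx
    · exact Or.inr ⟨x, hx, k, hk⟩
  · rintro (hy | ⟨x, hx, k, hk⟩)
    · exact ⟨0, _, hy, rfl, Or.inl rfl⟩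
    · exact ⟨k, _, hx, rfl, Or.inr hk⟩

lemma exists_list_decode_encode_finset {γ : Type*} [Encodable γ] (D : Finset γ) :
    ∃ l : List γ, decode (encode D) = some l ∧ ∀ a, a ∈ l ↔ a ∈ D := by
  have hdecode : (decode (α := List γ) (encode D)).map (↑) = some D.1 := Encodable.encodek D.1
  obtain ⟨l, hl, hlD⟩ := Option.map_eq_some_iff.1 hdecode
  exact ⟨l, hl, fun a => by rw [← Finset.mem_val, ← hlD, Multiset.mem_coe]⟩

lemma exists_setDriven_learner {g : Seq → ℕ} (hg : Computable g) :
    ∃ h : Learner, Partrec h ∧ ∀ I n, ∃ σ : Seq,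
      Sdop h I n = Part.some (g σ) ∧ posS σ = posS (segment I n) := by
  refine ⟨fun n => Part.some (g ((decode n).getD [])),
    (hg.comp (Primrec.option_getD.comp Primrec.decode (Primrec.const [])).to_comp).partrec,
    fun I n => ?_⟩
  obtain ⟨σ, hdecode, hmem⟩ := exists_list_decode_encode_finset (segment I n).toFinset
  refine ⟨σ, by simp only [Sdop, hdecode, Option.getD_some], ?_⟩
  ext x
  simp [posS, hmem]

lemma exists_setDriven_learner_W_eq_indexClosure :
    ∃ h : Learner, Partrec h ∧ ∀ I n, ∃ e,
      Sdop h I n = Part.some e ∧ W e = indexClosure (posS (segment I n)) := by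
  obtain ⟨g, hg, hWg⟩ := exists_computable_index rePred_mem_indexClosure_posS
  obtain ⟨h, hh, hSd⟩ := exists_setDriven_learner hg
  refine ⟨h, hh, fun I n => ?_⟩
  obtain ⟨σ, hσ, hpos⟩ := hSd I n
  exact ⟨g σ, hσ, hpos ▸ hWg σ⟩

theorem almostSelfDescribing_mem_learnable_sd_smon_bc :
    almostSelfDescribing ∈ Learnable TT AllL AllI Sdop (fun p I => SMon p I ∧ Bc p I) := by
  obtain ⟨h, hh, hconj⟩ := exists_setDriven_learner_W_eq_indexClosure
  have hsmon : ∀ I, SMon (Sdop h I) I := by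
    intro I s t hst e he e' he'
    obtain ⟨a, ha, hWa⟩ := hconj I s
    obtain ⟨b, hb, hWb⟩ := hconj I t
    obtain rfl := Part.mem_some_iff.1 (ha ▸ he)
    obtain rfl := Part.mem_some_iff.1 (hb ▸ he')
    rw [hWa, hWb]
    exact indexClosure_mono (posS_segment_mono I hst)
  have hbc : ∀ I, posI I ∈ almostSelfDescribing → Bc (Sdop h I) I := by
    intro I hI
    obtain ⟨B, hBI, hB, hclosure⟩ := exists_finite_forall_indexClosure_eq hI
    filter_upwards [eventually_subset_posS_segment hB hBI] with n hn
    obtain ⟨e, he, hWe⟩ := hconj I n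
    exact ⟨e, he ▸ Part.mem_some e, hWe.trans (hclosure _ hn (posS_segment_subset_posI I n))⟩
  refine ⟨h, hh, trivial, fun _ _ _ => trivial, fun L hL => ⟨?_, ?_⟩⟩
  · have hpos := (isInformant_canonicalInformant L).1
    exact hpos ▸ re_posI_of_bc (hbc (canonicalInformant L) (hpos.symm ▸ hL))
  · rintro I - ⟨rfl, -⟩
    exact ⟨hsmon I, hbc I hL⟩

/-! ### Binary strings and the sets extending them -/

/-- The length-`n` initial segment of the characteristic function of `S`. -/
noncomputable def charString (S : Set ℕ) (n : ℕ) : List Bool :=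
  (List.range n).map fun i => decide (i ∈ S)

/-- The finite set described by a binary string, continued by `false`. -/
def stringSet (τ : List Bool) : Set ℕ := {i | τ[i]? = some true}

lemma length_charString (S : Set ℕ) (n : ℕ) : (charString S n).length = n := by
  simp [charString]

lemma charString_prefix (S : Set ℕ) {m n : ℕ} (h : m ≤ n) :
    charString S m <+: charString S n := by
  obtain ⟨k, rfl⟩ := Nat.exists_eq_add_of_le h
  simp [charString, List.range_add]

lemma charString_length_eq {S : Set ℕ} {τ : List Bool}
    (h : ∀ i < τ.length, (i ∈ S ↔ i ∈ stringSet τ)) : charString S τ.length = τ := by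
  refine List.ext_getElem (length_charString S _) fun i _ hi => ?_
  simp [charString, h i hi, stringSet, List.getElem?_eq_getElem hi]

lemma lt_length_of_mem_stringSet {τ : List Bool} {i : ℕ} (h : i ∈ stringSet τ) :
    i < τ.length :=
  (List.getElem?_eq_some_iff.1 h).1

lemma finite_stringSet (τ : List Bool) : (stringSet τ).Finite :=
  (Set.finite_lt_nat τ.length).subset fun _ => lt_length_of_mem_stringSet

lemma mem_stringSet_iff_of_prefix {σ τ : List Bool} (h : σ <+: τ) {i : ℕ} (hi : i < σ.length) :
    i ∈ stringSet σ ↔ i ∈ stringSet τ := by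
  obtain ⟨ρ, rfl⟩ := h
  simp only [stringSet, Set.mem_ofPred_eq, List.getElem?_append_left hi]

lemma stringSet_subset_of_prefix {σ τ : List Bool} (h : σ <+: τ) :
    stringSet σ ⊆ stringSet τ :=
  fun _ hi => (mem_stringSet_iff_of_prefix h (lt_length_of_mem_stringSet hi)).1 hi

/-! ### Forcing mind changes along a binary string -/

section MindChanges

/-- `F` explanatorily identifies `S` from its characteristic function, where hypothesis `q` stands
for the set `ν q`. -/
def Identifies {β : Type*} (F : List Bool → Part β) (ν : β → Set ℕ) (S : Set ℕ) : Prop :=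
  ∃ q, ν q = S ∧ ∀ᶠ n in atTop, F (charString S n) = Part.some q

/-- The candidate extension and the time bound tried at stage `m`. The second component of the
pair `m` is ignored, so that every candidate recurs infinitely often. -/
def candidate (m : ℕ) : List Bool × ℕ := (decode m.unpair.1).getD ([], 0)

lemma exists_ge_candidate_eq (w : List Bool × ℕ) (M : ℕ) : ∃ m ≥ M, candidate m = w :=
  ⟨Nat.pair (encode w) M, Nat.right_le_pair _ _, by simp [candidate]⟩

lemma primrec_candidate : Primrec candidate :=
  Primrec.option_getD.comp (Primrec.decode.comp (Primrec.fst.comp Primrec.unpair))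
    (Primrec.const _)

variable {β : Type*}

/-- The proper extension `s.1 ++ w.1` has, at time `w.2`, a value other than the one recorded in
the state `s`. -/
def ForcesChange (ψ : ℕ → List Bool → Option β) (s : List Bool × Option β) (w : List Bool × ℕ) :
    Prop :=
  w.1 ≠ [] ∧ ψ w.2 (s.1 ++ w.1) ≠ none ∧ ψ w.2 (s.1 ++ w.1) ≠ s.2

/-- Stage `m` of the construction: the state is the string built so far together with the last
value recorded along it. -/
noncomputable def nextState (ψ : ℕ → List Bool → Option β) (m : ℕ) (s : List Bool × Option β) :
    List Bool × Option β :=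
  if ForcesChange ψ s (candidate m) then
    (s.1 ++ (candidate m).1, ψ (candidate m).2 (s.1 ++ (candidate m).1))
  else s

/-- The states of the construction that forces mind changes of the partial function approximated
by `ψ`, where `ψ k τ` is its value at `τ` if found within time `k`. -/
noncomputable def stage (ψ : ℕ → List Bool → Option β) : ℕ → List Bool × Option β
  | 0 => ([], none)
  | m + 1 => nextState ψ m (stage ψ m)

/-- The set described by the union of the strings built by `stage ψ`. -/
def limitSet (ψ : ℕ → List Bool → Option β) : Set ℕ := ⋃ m, stringSet (stage ψ m).1

section Primrec

variable {α : Type*} [Primcodable α] [Primcodable β] {ψ : α → ℕ → List Bool → Option β}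

lemma primrec_nextState (hψ : Primrec fun p : α × ℕ × List Bool => ψ p.1 p.2.1 p.2.2) :
    Primrec₂ fun (a : α) (q : ℕ × List Bool × Option β) => nextState (ψ a) q.1 q.2 := by
  have hcandidate : Primrec fun r : α × ℕ × List Bool × Option β => candidate r.2.1 :=
    primrec_candidate.comp (Primrec.fst.comp Primrec.snd)
  have hstring : Primrec fun r : α × ℕ × List Bool × Option β =>
      r.2.2.1 ++ (candidate r.2.1).1 :=
    Primrec.list_append.comp (Primrec.fst.comp (Primrec.snd.comp Primrec.snd))
      (Primrec.fst.comp hcandidate)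
  have hvalue : Primrec fun r : α × ℕ × List Bool × Option β =>
      ψ r.1 (candidate r.2.1).2 (r.2.2.1 ++ (candidate r.2.1).1) :=
    hψ.comp (Primrec.fst.pair ((Primrec.snd.comp hcandidate).pair hstring))
  have hforces : PrimrecPred fun r : α × ℕ × List Bool × Option β =>
      ForcesChange (ψ r.1) r.2.2 (candidate r.2.1) :=
    (Primrec.eq.comp (Primrec.fst.comp hcandidate) (Primrec.const [])).not.and
      ((Primrec.eq.comp hvalue (Primrec.const none)).not.and
        (Primrec.eq.comp hvalue (Primrec.snd.comp (Primrec.snd.comp Primrec.snd))).not)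
  exact Primrec.ite hforces (hstring.pair hvalue) (Primrec.snd.comp Primrec.snd)

lemma primrec_stage (hψ : Primrec fun p : α × ℕ × List Bool => ψ p.1 p.2.1 p.2.2) :
    Primrec₂ fun a m => stage (ψ a) m := by
  refine (Primrec.nat_rec (Primrec.const ([], none)) (primrec_nextState hψ)).of_eq fun a m => ?_
  induction m with
  | zero => rfl
  | succ m ih => simp only [ih, stage]

end Primrec

variable {ψ : ℕ → List Bool → Option β}

lemma stage_succ_of_forcesChange {m : ℕ} (h : ForcesChange ψ (stage ψ m) (candidate m)) :
    stage ψ (m + 1) = ((stage ψ m).1 ++ (candidate m).1,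
      ψ (candidate m).2 ((stage ψ m).1 ++ (candidate m).1)) :=
  if_pos h

lemma stage_succ_of_not_forcesChange {m : ℕ} (h : ¬ForcesChange ψ (stage ψ m) (candidate m)) :
    stage ψ (m + 1) = stage ψ m :=
  if_neg h

lemma stage_prefix {m n : ℕ} (h : m ≤ n) : (stage ψ m).1 <+: (stage ψ n).1 := by
  induction n, h using Nat.le_induction with
  | base => exact List.prefix_rfl
  | succ n _ ih =>
    refine ih.trans ?_
    by_cases hn : ForcesChange ψ (stage ψ n) (candidate n)
    · rw [stage_succ_of_forcesChange hn]
      exact List.prefix_append _ _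
    · rw [stage_succ_of_not_forcesChange hn]

lemma charString_limitSet_length_stage (m : ℕ) :
    charString (limitSet ψ) (stage ψ m).1.length = (stage ψ m).1 := by
  refine charString_length_eq fun i hi => ⟨fun h => ?_, fun h => Set.mem_iUnion.2 ⟨m, h⟩⟩
  obtain ⟨n, hn⟩ := Set.mem_iUnion.1 h
  rcases le_total m n with hmn | hnm
  · exact (mem_stringSet_iff_of_prefix (stage_prefix hmn) hi).2 hn
  · exact stringSet_subset_of_prefix (stage_prefix hnm) hn

lemma stage_eq_nil_or_exists_value (m : ℕ) :
    (stage ψ m).1 = [] ∨ ∃ v k, (stage ψ m).2 = some v ∧ v ∈ ψ k (stage ψ m).1 := by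
  induction m with
  | zero => exact Or.inl rfl
  | succ m ih =>
    by_cases hm : ForcesChange ψ (stage ψ m) (candidate m)
    · obtain ⟨v, hv⟩ := Option.ne_none_iff_exists'.1 hm.2.1
      rw [stage_succ_of_forcesChange hm]
      exact Or.inr ⟨v, (candidate m).2, hv, hv⟩
    · rwa [stage_succ_of_not_forcesChange hm]

lemma exists_le_length_stage
    (hinf : ∃ᶠ m in atTop, ForcesChange ψ (stage ψ m) (candidate m)) (N : ℕ) :
    ∃ m, N ≤ (stage ψ m).1.length := by
  induction N with
  | zero => exact ⟨0, Nat.zero_le _⟩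
  | succ N ih =>
    obtain ⟨M, hM⟩ := ih
    obtain ⟨m, hMm, hm⟩ := frequently_atTop.1 hinf M
    have hMm_length := (stage_prefix (ψ := ψ) hMm).length_le
    have hpos := List.length_pos_iff.2 hm.1
    refine ⟨m + 1, ?_⟩
    rw [stage_succ_of_forcesChange hm, List.length_append]
    omega

lemma exists_value_ne_of_frequently_forcesChange
    (hinf : ∃ᶠ m in atTop, ForcesChange ψ (stage ψ m) (candidate m)) (N : ℕ) (q : β) :
    ∃ m, N ≤ (stage ψ m).1.length ∧ ∃ v k, v ∈ ψ k (stage ψ m).1 ∧ v ≠ q := by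
  obtain ⟨M, hM⟩ := exists_le_length_stage hinf (N + 1)
  have hvalue : ∀ n ≥ M, N ≤ (stage ψ n).1.length ∧
      ∃ v k, (stage ψ n).2 = some v ∧ v ∈ ψ k (stage ψ n).1 := by
    intro n hn
    have hlength := hM.trans (stage_prefix (ψ := ψ) hn).length_le
    exact ⟨by omega, (stage_eq_nil_or_exists_value n).resolve_left
      (List.ne_nil_of_length_pos (by omega))⟩
  obtain ⟨m, hMm, hm⟩ := frequently_atTop.1 hinf M
  obtain ⟨hlength, v, k, hrecorded, hv⟩ := hvalue m hMm
  obtain ⟨hlength', v', k', hrecorded', hv'⟩ := hvalue (m + 1) (by omega)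
  have hne : v' ≠ v := by
    rintro rfl
    apply hm.2.2
    rw [hrecorded, ← hrecorded', stage_succ_of_forcesChange hm]
  by_cases hvq : v = q
  · exact ⟨m + 1, hlength', v', k', hv', hvq ▸ hne⟩
  · exact ⟨m, hlength, v, k, hv, hvq⟩

lemma exists_stage_forall_ge_eq
    (hfin : ¬∃ᶠ m in atTop, ForcesChange ψ (stage ψ m) (candidate m)) :
    ∃ M, ∀ m ≥ M, stage ψ m = stage ψ M ∧ ¬ForcesChange ψ (stage ψ M) (candidate m) := by
  obtain ⟨M, hM⟩ := eventually_atTop.1 (not_frequently.1 hfin)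
  have hconst : ∀ m ≥ M, stage ψ m = stage ψ M := by
    intro m hm
    induction m, hm using Nat.le_induction with
    | base => rfl
    | succ m hm ih => rw [stage_succ_of_not_forcesChange (hM m hm), ih]
  exact ⟨M, fun m hm => ⟨hconst m hm, hconst m hm ▸ hM m hm⟩⟩

lemma exists_string_forall_extension_value_eq
    (hfin : ¬∃ᶠ m in atTop, ForcesChange ψ (stage ψ m) (candidate m)) :
    ∃ τ, limitSet ψ = stringSet τ ∧ ∃ o : Option β,
      ∀ ρ ≠ [], ∀ k, ∀ v ∈ ψ k (τ ++ ρ), o = some v := by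
  obtain ⟨M, hM⟩ := exists_stage_forall_ge_eq hfin
  refine ⟨(stage ψ M).1, ?_, (stage ψ M).2, fun ρ hρ k v hv => ?_⟩
  · refine (Set.iUnion_subset fun m => ?_).antisymm
      (Set.subset_iUnion (fun m => stringSet (stage ψ m).1) M)
    rcases le_total m M with hmM | hMm
    · exact stringSet_subset_of_prefix (stage_prefix hmM)
    · rw [(hM m hMm).1]
  · obtain ⟨m, hMm, hm⟩ := exists_ge_candidate_eq (ρ, k) M
    by_contra hne
    refine (hM m hMm).2 ?_
    rw [Option.mem_def] at hv
    simpa [ForcesChange, hm, hρ, hv] using fun h => hne h.symm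

variable {F : List Bool → Part β} {ν : β → Set ℕ}

lemma not_identifies_limitSet (hF : ∀ τ v, v ∈ F τ ↔ ∃ k, v ∈ ψ k τ)
    (hinf : ∃ᶠ m in atTop, ForcesChange ψ (stage ψ m) (candidate m)) :
    ¬Identifies F ν (limitSet ψ) := by
  rintro ⟨q, -, hq⟩
  obtain ⟨N, hN⟩ := eventually_atTop.1 hq
  obtain ⟨m, hm, v, k, hv, hvq⟩ := exists_value_ne_of_frequently_forcesChange hinf N q
  have hFv : v ∈ F (stage ψ m).1 := (hF _ _).2 ⟨k, hv⟩
  rw [← charString_limitSet_length_stage, hN _ hm] at hFv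
  exact hvq (Part.mem_some_iff.1 hFv)

lemma eq_of_identifies_of_forall_extension_value_eq {τ : List Bool} {o : Option β}
    (ho : ∀ ρ ≠ [], ∀ v ∈ F (τ ++ ρ), o = some v) {S T : Set ℕ}
    (hSτ : charString S τ.length = τ) (hTτ : charString T τ.length = τ)
    (hS : Identifies F ν S) (hT : Identifies F ν T) : S = T := by
  have hlimit : ∀ {S : Set ℕ}, charString S τ.length = τ → Identifies F ν S →
      ∃ q, ν q = S ∧ o = some q := by
    rintro S hSτ ⟨q, hνq, hq⟩
    obtain ⟨n, hn, hτn⟩ := (hq.and (eventually_gt_atTop τ.length)).exists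
    obtain ⟨ρ, hρ⟩ := hSτ ▸ charString_prefix S hτn.le
    refine ⟨q, hνq, ho ρ ?_ q (by rw [hρ, hn]; exact Part.mem_some q)⟩
    rintro rfl
    have hlength := congrArg List.length hρ
    rw [List.append_nil, length_charString] at hlength
    exact hτn.ne hlength
  obtain ⟨q, rfl, hq⟩ := hlimit hSτ hS
  obtain ⟨q', rfl, hq'⟩ := hlimit hTτ hT
  rw [Option.some_injective _ (hq.symm.trans hq')]

theorem exists_finite_extension_not_identifies (hF : ∀ τ v, v ∈ F τ ↔ ∃ k, v ∈ ψ k τ)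
    (ν : β → Set ℕ) :
    ∃ S, limitSet ψ ⊆ S ∧ (S \ limitSet ψ).Finite ∧ ¬Identifies F ν S := by
  by_cases hinf : ∃ᶠ m in atTop, ForcesChange ψ (stage ψ m) (candidate m)
  · exact ⟨limitSet ψ, subset_rfl, by simp, not_identifies_limitSet hF hinf⟩
  obtain ⟨τ, hlimit, o, ho⟩ := exists_string_forall_extension_value_eq hinf
  rw [hlimit]
  have hnotMem : τ.length ∉ stringSet τ := fun h => (lt_length_of_mem_stringSet h).false
  by_contra! hall
  have hself := hall (stringSet τ) subset_rfl (by simp)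
  have hinsert := hall (insert τ.length (stringSet τ)) (Set.subset_insert _ _)
    (((finite_stringSet τ).insert _).subset Set.sdiff_subset)
  have heq := eq_of_identifies_of_forall_extension_value_eq
    (fun ρ hρ v hv => ((hF _ _).1 hv).elim fun k hk => ho ρ hρ k v hk)
    (charString_length_eq fun i _ => Iff.rfl)
    (charString_length_eq fun i hi => by simp [hi.ne]) hself hinsert
  exact hnotMem (heq ▸ Set.mem_insert _ _)

end MindChanges

/-! ### Diagonalizing inside a column -/

lemma pair_right_injective (e : ℕ) : Function.Injective (Nat.pair e) :=
  fun _ _ h => (Nat.pair_eq_pair.1 h).2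

/-- The copy `{e} × S` of `S` in column `e` of the pairing function. -/
def column (e : ℕ) (S : Set ℕ) : Set ℕ := Set.image (Nat.pair e) S

lemma mem_column {e x : ℕ} {S : Set ℕ} : x ∈ column e S ↔ x.unpair.1 = e ∧ x.unpair.2 ∈ S := by
  constructor
  · rintro ⟨i, hi, rfl⟩
    simpa using hi
  · rintro ⟨rfl, hx⟩
    exact ⟨x.unpair.2, hx, Nat.pair_unpair x⟩

/-- The first `τ.length` data of the canonical informant for any language `column e S` with `S`
extending `τ`; the bit `τ[i]` concerns the number `Nat.pair e i`. -/
def columnData (e : ℕ) (τ : List Bool) : Seq :=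
  (List.range τ.length).map fun x =>
    (x, decide (x.unpair.1 = e ∧ τ[x.unpair.2]? = some true))

lemma columnData_charString (e : ℕ) (S : Set ℕ) (n : ℕ) :
    columnData e (charString S n) = segment (canonicalInformant (column e S)) n := by
  rw [columnData, segment, length_charString]
  refine List.map_congr_left fun x hx => ?_
  have hlt : x.unpair.2 < n := (Nat.unpair_right_le x).trans_lt (List.mem_range.1 hx)
  simp [canonicalInformant, mem_column, charString, hlt]

lemma primrec_columnData : Primrec₂ columnData := by
  have hx : Primrec fun r : (ℕ × List Bool) × ℕ => r.2.unpair := Primrec.unpair.comp Primrec.snd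
  have hbit : PrimrecPred fun r : (ℕ × List Bool) × ℕ =>
      r.2.unpair.1 = r.1.1 ∧ r.1.2[r.2.unpair.2]? = some true :=
    (Primrec.eq.comp (Primrec.fst.comp hx) (Primrec.fst.comp Primrec.fst)).and
      (Primrec.eq.comp (Primrec.list_getElem?.comp (Primrec.snd.comp Primrec.fst)
        (Primrec.snd.comp hx)) (Primrec.const (some true)))
  exact Primrec.list_map (Primrec.list_range.comp (Primrec.list_length.comp Primrec.snd))
    (Primrec.snd.pair hbit.decide)

/-- The output, within time `k`, of the learner with code `c` on the data in column `e` described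
by a binary string. -/
def columnValue (c : Code) (e k : ℕ) (τ : List Bool) : Option ℕ :=
  Code.evaln k c (encode (columnData e τ))

lemma exists_W_eq_column_limitSet (c : Code) :
    ∃ e, W e = column e (limitSet (columnValue c e)) := by
  have hvalue : Primrec fun p : ℕ × ℕ × List Bool => columnValue c p.1 p.2.1 p.2.2 :=
    Code.primrec_evaln.comp (((Primrec.fst.comp Primrec.snd).pair (Primrec.const c)).pair
      (Primrec.encode.comp
        (primrec_columnData.comp Primrec.fst (Primrec.snd.comp Primrec.snd))))
  have hR : PrimrecRel fun (q : ℕ × ℕ) (m : ℕ) => q.2.unpair.1 = q.1 ∧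
      (stage (columnValue c q.1) m).1[q.2.unpair.2]? = some true := by
    have he : Primrec fun r : (ℕ × ℕ) × ℕ => r.1.1 := Primrec.fst.comp Primrec.fst
    have hy : Primrec fun r : (ℕ × ℕ) × ℕ => r.1.2.unpair :=
      Primrec.unpair.comp (Primrec.snd.comp Primrec.fst)
    exact (Primrec.eq.comp (Primrec.fst.comp hy) he).and (Primrec.eq.comp
      (Primrec.list_getElem?.comp (Primrec.fst.comp ((primrec_stage hvalue).comp he Primrec.snd))
        (Primrec.snd.comp hy)) (Primrec.const (some true)))
  obtain ⟨e, he⟩ := exists_self_referential_index (rePred_exists_nat hR)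
  refine ⟨e, he.trans (Set.ext fun y => ?_)⟩
  simp [mem_column, limitSet, stringSet]

lemma identifies_of_ex {h : Learner} {e : ℕ} {S : Set ℕ}
    (hex : Ex (Gop h (canonicalInformant (column e S))) (canonicalInformant (column e S))) :
    Identifies (fun τ => h (encode (columnData e τ)))
      (fun q => Set.preimage (Nat.pair e) (W q)) S := by
  obtain ⟨q, hWq, hq⟩ := hex
  refine ⟨q, ?_, ?_⟩
  · change Set.preimage (Nat.pair e) (W q) = S
    rw [hWq, (isInformant_canonicalInformant _).1]
    exact Set.preimage_image_eq S (pair_right_injective e)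
  · simpa only [Gop, ← columnData_charString] using hq

theorem almostSelfDescribing_notMem_learnable_g_ex :
    almostSelfDescribing ∉ Learnable TT AllL AllI Gop Ex := by
  rintro ⟨h, hh, -, -, hlearn⟩
  obtain ⟨c, rfl⟩ := Code.exists_code.1 (Partrec.nat_iff.1 hh)
  obtain ⟨e, he⟩ := exists_W_eq_column_limitSet c
  obtain ⟨S, hsub, hfin, hnot⟩ := exists_finite_extension_not_identifies
    (ψ := columnValue c e) (F := fun τ => c.eval (encode (columnData e τ)))
    (fun _ _ => Code.evaln_complete) (fun q => Set.preimage (Nat.pair e) (W q))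
  have hmem : column e S ∈ almostSelfDescribing := by
    refine ⟨e, fun x hx => (mem_column.1 hx).1, ?_, ?_⟩
    · rw [he]
      exact Set.image_mono hsub
    · rw [he]
      exact Set.image_sdiff (pair_right_injective e) _ _ ▸ hfin.image (Nat.pair e)
  exact hnot (identifies_of_ex
    ((hlearn _ hmem).2 _ trivial (isInformant_canonicalInformant _)))

/-- `[Inf Sd SMon Bc] \ [Inf G Ex] ≠ ∅`. -/
theorem bc_ex_separation :
    (Learnable TT AllL AllI Sdop (fun p I => SMon p I ∧ Bc p I) \
      Learnable TT AllL AllI Gop Ex).Nonempty :=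
  ⟨almostSelfDescribing, almostSelfDescribing_mem_learnable_sd_smon_bc,
    almostSelfDescribing_notMem_learnable_g_ex⟩

end InfBc
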